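/- arXiv:1802.00681 — 2 statements merged into one kernel-verified Lean document; each statement's English description precedes it below -/
import Mathlib

section
/- Let T : D → D be a (λ,ρ)-firmly nonexpansive mapping for some λ ∈ (0,1), let w ∈ D be a fixed point of T, and let (f_n) be generated by the iterative process g_n = (1−α_n) f_n + α_n T f_n, f_{n+1} = T g_n with (α_n) ⊂ (0,1) and f_1 ∈ D. Then limsup_{n→∞} ρ(T f_n − w) ≤ lim_{n→∞} ρ(f_n − w). -/
open Filter

/-!
If `φ` does not increase along `T`, then `x` and `T x` both lie in the sublevel set
`{y ∈ D | φ y ≤ φ x}`. For quasiconvex `φ` this set is convex, and `T` maps it into itself, so it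
contains the whole segment from `x` to `T x` as well as the image of that segment. Hence `φ`
decreases along the iteration. A firmly nonexpansive map is nonexpansive, so this applies to
`φ x = ρ (x - w)` for every fixed point `w`.
-/

section PicardMann

variable {𝕜 E β : Type*} [Semiring 𝕜] [PartialOrder 𝕜] [AddCommMonoid E] [SMul 𝕜 E]

variable (𝕜) in
/-- Sequences generated by the Picard–Mann process `f (n + 1) = T (g n)`, where `g n` is a convex
combination of `f n` and `T (f n)`. The averages `g n` and their weights are left implicit: `g n`
is only required to lie in the closed segment, so the weights may vary freely in `[0, 1]`. -/
def IsPicardMannSeq (T : E → E) (f : ℕ → E) : Prop :=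
  ∀ n, f (n + 1) ∈ T '' segment 𝕜 (f n) (T (f n))

namespace IsPicardMannSeq

variable {D : Set E} {T : E → E} {f : ℕ → E} {φ : E → β}

theorem mem (hf : IsPicardMannSeq 𝕜 T f) (hD : Convex 𝕜 D) (hTD : Set.MapsTo T D D)
    (hf0 : f 0 ∈ D) (n : ℕ) : f n ∈ D := by
  induction n with
  | zero => exact hf0
  | succ n ih =>
    obtain ⟨y, hy, hTy⟩ := hf n
    exact hTy ▸ hTD (hD.segment_subset ih (hTD ih) hy)

theorem apply_succ_le [Preorder β] (hf : IsPicardMannSeq 𝕜 T f) (hφ : QuasiconvexOn 𝕜 D φ)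
    (hTD : Set.MapsTo T D D) (hφT : ∀ x ∈ D, φ (T x) ≤ φ x) {n : ℕ} (hn : f n ∈ D) :
    φ (f (n + 1)) ≤ φ (f n) := by
  obtain ⟨y, hy, hTy⟩ := hf n
  obtain ⟨hyD, hyφ⟩ : y ∈ {x ∈ D | φ x ≤ φ (f n)} :=
    (hφ (φ (f n))).segment_subset ⟨hn, le_rfl⟩ ⟨hTD hn, hφT _ hn⟩ hy
  exact hTy ▸ (hφT y hyD).trans hyφ

theorem antitone_comp [Preorder β] (hf : IsPicardMannSeq 𝕜 T f) (hD : Convex 𝕜 D)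
    (hφ : QuasiconvexOn 𝕜 D φ) (hTD : Set.MapsTo T D D) (hφT : ∀ x ∈ D, φ (T x) ≤ φ x)
    (hf0 : f 0 ∈ D) : Antitone fun n => φ (f n) :=
  antitone_nat_of_succ_le fun n => hf.apply_succ_le hφ hTD hφT (hf.mem hD hTD hf0 n)

end IsPicardMannSeq

theorem stmt_4_general [ConditionallyCompleteLinearOrder β] [TopologicalSpace β] [OrderTopology β]
    {D : Set E} {T : E → E} {f : ℕ → E} {φ : E → β} (hD : Convex 𝕜 D)
    (hφ : QuasiconvexOn 𝕜 D φ) (hφD : BddBelow (φ '' D)) (hTD : Set.MapsTo T D D)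
    (hφT : ∀ x ∈ D, φ (T x) ≤ φ x) (hf : IsPicardMannSeq 𝕜 T f) (hf0 : f 0 ∈ D) :
    ∃ m : β, Tendsto (fun n => φ (f n)) atTop (nhds m) ∧
      limsup (fun n => φ (T (f n))) atTop ≤ m := by
  have hfD : ∀ n, f n ∈ D := hf.mem hD hTD hf0
  have hbdd {u : ℕ → E} (hu : ∀ n, u n ∈ D) : BddBelow (Set.range fun n => φ (u n)) :=
    hφD.mono (Set.range_subset_iff.2 fun n => Set.mem_image_of_mem φ (hu n))
  have hlim := tendsto_atTop_ciInf (hf.antitone_comp hD hφ hTD hφT hf0) (hbdd hfD)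
  refine ⟨_, hlim, ?_⟩
  calc limsup (fun n => φ (T (f n))) atTop
      ≤ limsup (fun n => φ (f n)) atTop :=
        limsup_le_limsup (Eventually.of_forall fun n => hφT _ (hfD n))
          (hbdd fun n => hTD (hfD n)).isBoundedUnder_of_range.isCoboundedUnder_le
          hlim.isBoundedUnder_le
    _ = ⨅ n, φ (f n) := hlim.limsup_eq

end PicardMann

theorem IsPicardMannSeq.of_mem_Icc {𝕜 E : Type*} [Ring 𝕜] [PartialOrder 𝕜] [IsOrderedAddMonoid 𝕜]
    [AddCommMonoid E] [SMul 𝕜 E] {T : E → E} {f g : ℕ → E} {α : ℕ → 𝕜}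
    (hα : ∀ n, α n ∈ Set.Icc (0 : 𝕜) 1) (hg : ∀ n, g n = (1 - α n) • f n + α n • T (f n))
    (hf : ∀ n, f (n + 1) = T (g n)) : IsPicardMannSeq 𝕜 T f := fun n =>
  ⟨g n, ⟨1 - α n, α n, sub_nonneg.2 (hα n).2, (hα n).1, sub_add_cancel 1 (α n), (hg n).symm⟩,
    (hf n).symm⟩

section FirmlyNonexpansive

variable {V : Type*} [AddCommGroup V] [Module ℝ V] {ρ : V → ℝ} {D : Set V} {T : V → V} {lam : ℝ}

/-- `(lam, ρ)`-firm nonexpansiveness on `D`, for a map `T` defined on the whole space. -/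
def FirmlyNonexpansiveOn (lam : ℝ) (ρ : V → ℝ) (D : Set V) (T : V → V) : Prop :=
  ∀ f ∈ D, ∀ g ∈ D, ρ (T f - T g) ≤ ρ ((1 - lam) • (f - g) + lam • (T f - T g))

theorem FirmlyNonexpansiveOn.apply_sub_le (hT : FirmlyNonexpansiveOn lam ρ D T)
    (hρ : ConvexOn ℝ Set.univ ρ) (hlam : lam ∈ Set.Ico (0 : ℝ) 1) {x y : V} (hx : x ∈ D)
    (hy : y ∈ D) : ρ (T x - T y) ≤ ρ (x - y) := by
  have hlam' : 0 < 1 - lam := sub_pos.2 hlam.2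
  have hle : ρ (T x - T y) ≤ (1 - lam) * ρ (x - y) + lam * ρ (T x - T y) :=
    (hT x hx y hy).trans <|
      hρ.2 (Set.mem_univ _) (Set.mem_univ _) hlam'.le hlam.1 (sub_add_cancel 1 lam)
  exact le_of_mul_le_mul_left (by linarith) hlam'

theorem FirmlyNonexpansiveOn.apply_sub_le_of_isFixedPt (hT : FirmlyNonexpansiveOn lam ρ D T)
    (hρ : ConvexOn ℝ Set.univ ρ) (hlam : lam ∈ Set.Ico (0 : ℝ) 1) {w : V} (hwD : w ∈ D)
    (hw : Function.IsFixedPt T w) {x : V} (hx : x ∈ D) : ρ (T x - w) ≤ ρ (x - w) := by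
  simpa only [hw.eq] using hT.apply_sub_le hρ hlam hx hwD

theorem quasiconvexOn_comp_sub_right (hρ : ConvexOn ℝ Set.univ ρ) (hD : Convex ℝ D) (w : V) :
    QuasiconvexOn ℝ D fun x => ρ (x - w) := by
  have hconv : ConvexOn ℝ Set.univ fun x => ρ (x - w) := by
    simpa [Function.comp_def, sub_eq_add_neg] using hρ.translate_left (-w)
  exact (hconv.subset (Set.subset_univ D) hD).quasiconvexOn

end FirmlyNonexpansive

/-- limsup ρ(T f_n − w) ≤ lim ρ(f_n − w). -/
theorem stmt_4
    {V : Type*} [AddCommGroup V] [Module ℝ V]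
    (ρ : V → ℝ)
    (hnonneg : ∀ f : V, 0 ≤ ρ f)
    (heven : ∀ f : V, ρ (-f) = ρ f)
    (hconv : ∀ f g : V, ∀ α β : ℝ, 0 ≤ α → 0 ≤ β → α + β = 1 →
      ρ (α • f + β • g) ≤ α * ρ f + β * ρ g)
    (D : Set V) (hDne : D.Nonempty) (hDconv : Convex ℝ D)
    (T : V → V) (hTmaps : ∀ f ∈ D, T f ∈ D)
    (lam : ℝ) (hlam : lam ∈ Set.Ioo (0 : ℝ) 1)
    (hfirm : ∀ f ∈ D, ∀ g ∈ D,
      ρ (T f - T g) ≤ ρ ((1 - lam) • (f - g) + lam • (T f - T g)))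
    (w : V) (hwD : w ∈ D) (hw : T w = w)
    (α : ℕ → ℝ) (hα : ∀ n, α n ∈ Set.Ioo (0 : ℝ) 1)
    (f g : ℕ → V) (hf0 : f 0 ∈ D)
    (hg : ∀ n, g n = (1 - α n) • f n + (α n) • T (f n))
    (hfrec : ∀ n, f (n + 1) = T (g n)) :
    ∃ m : ℝ, Tendsto (fun n => ρ (f n - w)) atTop (nhds m) ∧
      limsup (fun n => ρ (T (f n) - w)) atTop ≤ m := by
  have hρ : ConvexOn ℝ Set.univ ρ :=
    ⟨convex_univ, fun x _ y _ a b ha hb hab => hconv x y a b ha hb hab⟩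
  have hT : FirmlyNonexpansiveOn lam ρ D T := hfirm
  exact stmt_4_general (φ := fun x => ρ (x - w)) hDconv
    (quasiconvexOn_comp_sub_right hρ hDconv w)
    ⟨0, Set.forall_mem_image.2 fun x _ => hnonneg (x - w)⟩ hTmaps
    (fun _ => hT.apply_sub_le_of_isFixedPt hρ (Set.Ioo_subset_Ico_self hlam) hwD hw)
    (.of_mem_Icc (fun n => Set.Ioo_subset_Icc_self (hα n)) hg hfrec) hf0
end

section
/- Let T : D → D be a (λ,ρ)-firmly nonexpansive mapping for some λ ∈ (0,1) and let z ∈ D. Then for every f ∈ D, ρ((z − T z)/3) ≤ 2 ρ(z − f) + ρ(f − T f). -/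
/-!
Firm nonexpansiveness and convexity of `ρ` give `ρ (T f - T z) ≤ ρ (f - z)`. The vector
`(z - T z) / 3` is the average of `z - f`, `f - T f` and `T f - T z`, so Jensen's inequality
applies.
-/

section FirmlyNonexpansive

variable {𝕜 V : Type*} [Field 𝕜] [LinearOrder 𝕜] [AddCommGroup V] [Module 𝕜 V]

/-- `(lam, ρ)`-firm nonexpansiveness of `T` on `D`, where `T` is encoded as a total map whose values
outside `D` are arbitrary. The case `lam = 0` is plain `ρ`-nonexpansiveness. -/
def IsFirmlyNonexpansiveOn (lam : 𝕜) (ρ : V → 𝕜) (T : V → V) (D : Set V) : Prop :=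
  ∀ f ∈ D, ∀ g ∈ D, ρ (T f - T g) ≤ ρ ((1 - lam) • (f - g) + lam • (T f - T g))

variable [IsStrictOrderedRing 𝕜] {lam : 𝕜} {ρ : V → 𝕜} {T : V → V} {D : Set V} {f g z : V}

theorem map_third_smul_add_add_le_of_convexOn (hρ : ConvexOn 𝕜 Set.univ ρ) (u v w : V) :
    ρ ((3⁻¹ : 𝕜) • (u + v + w)) ≤ 3⁻¹ * (ρ u + ρ v + ρ w) := by
  have jensen := hρ.map_sum_le (t := Finset.univ) (w := fun _ : Fin 3 ↦ (3⁻¹ : 𝕜)) (p := ![u, v, w])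
    (fun _ _ ↦ by positivity) (by simp) (fun _ _ ↦ Set.mem_univ _)
  simpa [Fin.sum_univ_three, mul_add] using jensen

theorem IsFirmlyNonexpansiveOn.map_sub_le (hT : IsFirmlyNonexpansiveOn lam ρ T D)
    (hρ : ConvexOn 𝕜 Set.univ ρ) (hlam : lam ∈ Set.Ico 0 1) (hf : f ∈ D) (hg : g ∈ D) :
    ρ (T f - T g) ≤ ρ (f - g) :=
  (hT f hf g hg).trans <|
    hρ.le_left_of_right_le' (Set.mem_univ _) (Set.mem_univ _) (sub_pos.2 hlam.2) hlam.1
      (sub_add_cancel 1 lam) (hT f hf g hg)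

theorem stmt_14_general (hρ : ConvexOn 𝕜 Set.univ ρ) (hlam : lam ∈ Set.Ico 0 1)
    (hT : IsFirmlyNonexpansiveOn lam ρ T D) (hz : z ∈ D) (hf : f ∈ D) :
    ρ ((3⁻¹ : 𝕜) • (z - T z)) ≤ 3⁻¹ * (ρ (z - f) + ρ (f - z) + ρ (f - T f)) := by
  calc ρ ((3⁻¹ : 𝕜) • (z - T z))
      = ρ ((3⁻¹ : 𝕜) • ((z - f) + (T f - T z) + (f - T f))) := by congr 2; abel
    _ ≤ 3⁻¹ * (ρ (z - f) + ρ (T f - T z) + ρ (f - T f)) :=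
      map_third_smul_add_add_le_of_convexOn hρ _ _ _
    _ ≤ 3⁻¹ * (ρ (z - f) + ρ (f - z) + ρ (f - T f)) := by
      gcongr
      exact hT.map_sub_le hρ hlam hf hz

end FirmlyNonexpansive

/-- For a (λ,ρ)-firmly nonexpansive T and z, f ∈ D,
ρ((z − T z)/3) ≤ 2 ρ(z − f) + ρ(f − T f). -/
theorem stmt_14
    {V : Type*} [AddCommGroup V] [Module ℝ V]
    (ρ : V → ℝ)
    (hnonneg : ∀ f : V, 0 ≤ ρ f)
    (heven : ∀ f : V, ρ (-f) = ρ f)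
    (hconv : ∀ f g : V, ∀ α β : ℝ, 0 ≤ α → 0 ≤ β → α + β = 1 →
      ρ (α • f + β • g) ≤ α * ρ f + β * ρ g)
    (D : Set V) (hDne : D.Nonempty) (hDconv : Convex ℝ D)
    (T : V → V) (hTmaps : ∀ f ∈ D, T f ∈ D)
    (lam : ℝ) (hlam : lam ∈ Set.Ioo (0 : ℝ) 1)
    (hfirm : ∀ f ∈ D, ∀ g ∈ D,
      ρ (T f - T g) ≤ ρ ((1 - lam) • (f - g) + lam • (T f - T g)))
    (z : V) (hzD : z ∈ D) :
    ∀ f ∈ D, ρ ((3⁻¹ : ℝ) • (z - T z)) ≤ 2 * ρ (z - f) + ρ (f - T f) := by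
  intro f hf
  have hρ : ConvexOn ℝ Set.univ ρ :=
    ⟨convex_univ, fun u _ v _ α β hα hβ hαβ ↦ hconv u v α β hα hβ hαβ⟩
  have hsymm : ρ (f - z) = ρ (z - f) := by rw [← heven, neg_sub]
  linarith [stmt_14_general hρ (Set.Ioo_subset_Ico_self hlam) hfirm hzD hf,
    hnonneg (z - f), hnonneg (f - T f)]
end
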